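/- arXiv:0809.1643 — 2 statements merged into one kernel-verified Lean document; each statement's English description precedes it below -/
import Mathlib

section
/- Let p < q be reals, let 1 ≤ r ≤ n be integers, let f be (n+1)-times continuously differentiable on [p,q], and let x, x_0, …, x_n be pairwise distinct points of [p,q]. Then there exists ξ in the smallest closed interval containing x, x_0, …, x_n such that f(x) = Σ_{i=0}^{r−1} f[x_0, …, x_i]·∏_{j=0}^{i−1}(x − x_j) + d_{r,r+1,…,n}[x]·∏_{i=0}^{r−1}(x − x_i) + (f^{(n+1)}(ξ)/(n+1)!)·∏_{i=0}^{n}(x − x_i). -/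
/-- Divided difference `f[y i, y (i+1), …, y j]` defined by the standard recursion
`f[y_i,…,y_j] = (f[y_{i+1},…,y_j] − f[y_i,…,y_{j−1}])/(y_j − y_i)`. -/
noncomputable def divDiff (f : ℝ → ℝ) (y : ℕ → ℝ) (i j : ℕ) : ℝ :=
  if _h : j ≤ i then f (y i)
  else (divDiff f y (i + 1) j - divDiff f y i (j - 1)) / (y j - y i)
termination_by j - i
decreasing_by all_goals omega

/-- Neville iteration: `neville xs x g i j` is the iterate built from the initial
values `g j` (at node `xs j`) over the nodes `xs j, …, xs (j+i)`. -/
noncomputable def neville (xs : ℕ → ℝ) (x : ℝ) (g : ℕ → ℝ) : ℕ → ℕ → ℝ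
  | 0, j => g j
  | i + 1, j =>
      ((xs (i + 1 + j) - x) * neville xs x g i j - (xs j - x) * neville xs x g i (j + 1)) /
        (xs (i + 1 + j) - xs j)

/-- Aitken iteration with base index `r`: `aitken xs x g r i j` is the iterate
`d_{r,r+1,…,i,j}` (for `r ≤ i < j`) built from the initial values `g j` at the nodes `xs j`. -/
noncomputable def aitken (xs : ℕ → ℝ) (x : ℝ) (g : ℕ → ℝ) (r : ℕ) (i j : ℕ) : ℝ :=
  if _h : i ≤ r then ((xs j - x) * g r - (xs r - x) * g j) / (xs j - xs r)
  else ((xs j - x) * aitken xs x g r (i - 1) i - (xs i - x) * aitken xs x g r (i - 1) j) /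
        (xs j - xs i)
termination_by i
decreasing_by all_goals omega

/-- The full Aitken iterate `d_{r,r+1,…,n}` (equal to the initial value when `n = r`). -/
noncomputable def aitkenLast (xs : ℕ → ℝ) (x : ℝ) (g : ℕ → ℝ) (r n : ℕ) : ℝ :=
  if n ≤ r then g n else aitken xs x g r (n - 1) n

/-- Confluent divided difference `g[x,…,x (m times), xi]`, defined using
`g[x,…,x (m times)] = g^{(m−1)}(x)/(m−1)!` and `g[xi] = g xi`. -/
noncomputable def confDD (g : ℝ → ℝ) (x xi : ℝ) : ℕ → ℝ
  | 0 => g xi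
  | m + 1 => (confDD g x xi m - iteratedDeriv m g x / (Nat.factorial m : ℝ)) / (xi - x)

/-!
The approximant `N(t) + D(t) ∏_{i < r} (t - x_i)`, where `N` is the Newton polynomial of `f` at
`x_0, …, x_{r-1}` and `D` is the Lagrange interpolant of `t ↦ f[t, x_0, …, x_{r-1}]` at
`x_r, …, x_n`, has degree at most `n` and agrees with `f` at all the `x_i`: at the first `r` nodes
the second term vanishes, and at the others one recovers Newton's formula with remainder. Aitken's
recursion evaluates `D` at `x`, and the remaining error is that of polynomial interpolation, which
Rolle's theorem expresses through `f^{(n+1)}`.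
-/

open Polynomial

section DividedDifferences

variable {f : ℝ → ℝ} {y : ℕ → ℝ}

theorem divDiff_self (f : ℝ → ℝ) (y : ℕ → ℝ) (i : ℕ) : divDiff f y i i = f (y i) := by
  rw [divDiff, dif_pos le_rfl]

theorem sub_mul_divDiff_succ {i j : ℕ} (hij : i ≤ j) (hy : y (j + 1) ≠ y i) :
    (y (j + 1) - y i) * divDiff f y i (j + 1) = divDiff f y (i + 1) (j + 1) - divDiff f y i j := by
  rw [divDiff.eq_1 f y i, dif_neg (by lia), Nat.add_sub_cancel,
    mul_div_cancel₀ _ (sub_ne_zero.2 hy)]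

theorem divDiff_succ_succ (f : ℝ → ℝ) (y : ℕ → ℝ) (i j : ℕ) :
    divDiff f y (i + 1) (j + 1) = divDiff f (fun k ↦ y (k + 1)) i j := by
  induction i, j using divDiff.induct with
  | case1 i j hji => rw [divDiff, divDiff.eq_1 f (fun k ↦ y (k + 1)), dif_pos hji, dif_pos (by lia)]
  | case2 i j hji ih₁ ih₂ =>
    obtain ⟨j, rfl⟩ : ∃ m, j = m + 1 := ⟨j - 1, by lia⟩
    rw [Nat.add_sub_cancel] at ih₂
    rw [divDiff, divDiff.eq_1 f (fun k ↦ y (k + 1)), dif_neg hji, dif_neg (by lia), ih₁,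
      Nat.add_sub_cancel, Nat.add_sub_cancel, ih₂]

/-- The Newton form `∑_{i < r} f[y_0, …, y_i] ∏_{j < i} (X - y_j)` of the polynomial interpolating
`f` at the `r` nodes `y_0, …, y_{r-1}`. -/
noncomputable def newtonPoly (f : ℝ → ℝ) (y : ℕ → ℝ) (r : ℕ) : ℝ[X] :=
  ∑ i ∈ Finset.range r, C (divDiff f y 0 i) * Lagrange.nodal (Finset.range i) y

theorem newtonPoly_succ (f : ℝ → ℝ) (y : ℕ → ℝ) (r : ℕ) :
    newtonPoly f y (r + 1) =
      newtonPoly f y r + C (divDiff f y 0 r) * Lagrange.nodal (Finset.range r) y :=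
  Finset.sum_range_succ _ r

theorem eval_newtonPoly (f : ℝ → ℝ) (y : ℕ → ℝ) (r : ℕ) (t : ℝ) :
    (newtonPoly f y r).eval t =
      ∑ i ∈ Finset.range r, divDiff f y 0 i * ∏ j ∈ Finset.range i, (t - y j) := by
  simp only [newtonPoly, eval_finsetSum, eval_mul, eval_C, Lagrange.eval_nodal]

theorem degree_newtonPoly_lt (f : ℝ → ℝ) (y : ℕ → ℝ) (r : ℕ) : (newtonPoly f y r).degree < r := by
  refine (degree_sum_le _ _).trans_lt ((Finset.sup_lt_iff (WithBot.bot_lt_coe r)).2 fun i hi ↦ ?_)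
  calc (C (divDiff f y 0 i) * Lagrange.nodal (Finset.range i) y).degree
      ≤ (Lagrange.nodal (Finset.range i) y).degree := by
        rw [C_mul']; exact degree_smul_le _ _
    _ = i := by rw [Lagrange.degree_nodal, Finset.card_range]
    _ < r := by exact_mod_cast Finset.mem_range.1 hi

/- Both sides interpolate `f` at `y_1, …, y_r` and have leading coefficient `f[y_0, …, y_r]`: the
node `y_0` may be put first or last. -/
theorem newtonPoly_succ_eq_shift (r : ℕ) (hy : ∀ k < r, y (k + 1) ≠ y 0) :
    newtonPoly f y (r + 1) = newtonPoly f (fun k ↦ y (k + 1)) r +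
      C (divDiff f y 0 r) * Lagrange.nodal (Finset.range r) (fun k ↦ y (k + 1)) := by
  induction r with
  | zero => simp [newtonPoly]
  | succ r ih =>
    have hrec : (C (y (r + 1)) - C (y 0)) * C (divDiff f y 0 (r + 1)) =
        C (divDiff f (fun k ↦ y (k + 1)) 0 r) - C (divDiff f y 0 r) := by
      simp only [← C_sub, ← C_mul, ← divDiff_succ_succ,
        sub_mul_divDiff_succ (Nat.zero_le r) (hy r r.lt_succ_self)]
    have hfirst : Lagrange.nodal (Finset.range (r + 1)) y =
        Lagrange.nodal (Finset.range r) (fun k ↦ y (k + 1)) * (X - C (y 0)) :=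
      Finset.prod_range_succ' _ r
    have hlast : Lagrange.nodal (Finset.range (r + 1)) (fun k ↦ y (k + 1)) =
        Lagrange.nodal (Finset.range r) (fun k ↦ y (k + 1)) * (X - C (y (r + 1))) :=
      Finset.prod_range_succ _ r
    rw [newtonPoly_succ, ih fun k hk ↦ hy k (by lia), newtonPoly_succ, hfirst, hlast]
    linear_combination Lagrange.nodal (Finset.range r) (fun k ↦ y (k + 1)) * hrec

theorem eval_newtonPoly_node_zero (f : ℝ → ℝ) (y : ℕ → ℝ) (r : ℕ) :
    (newtonPoly f y (r + 1)).eval (y 0) = f (y 0) := by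
  simp [eval_newtonPoly, Finset.sum_range_succ', Finset.prod_range_succ', divDiff_self]

theorem eval_newtonPoly_node {r i : ℕ} (hy : Set.InjOn y (Set.Iio r)) (hi : i < r) :
    (newtonPoly f y r).eval (y i) = f (y i) := by
  induction i generalizing y r with
  | zero =>
    obtain ⟨r, rfl⟩ : ∃ m, r = m + 1 := ⟨r - 1, by lia⟩
    exact eval_newtonPoly_node_zero f y r
  | succ i ih =>
    obtain ⟨r, rfl⟩ : ∃ m, r = m + 1 := ⟨r - 1, by lia⟩
    have hi : i < r := Nat.lt_of_succ_lt_succ hi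
    have hshift : Set.InjOn (fun k ↦ y (k + 1)) (Set.Iio r) :=
      hy.comp (add_left_injective 1).injOn fun _ ↦ Nat.succ_lt_succ
    have hnodal : (Lagrange.nodal (Finset.range r) fun k ↦ y (k + 1)).eval (y (i + 1)) = 0 :=
      Lagrange.eval_nodal_at_node (v := fun k ↦ y (k + 1)) (Finset.mem_range.2 hi)
    rw [newtonPoly_succ_eq_shift r fun k hk ↦ hy.ne (Nat.succ_lt_succ hk) r.succ_pos k.succ_ne_zero,
      eval_add, eval_mul, hnodal, mul_zero, add_zero, ih hshift hi]

theorem eval_newtonPoly_add_divDiff_cons {r : ℕ} {t : ℝ} (ht : ∀ k < r, y k ≠ t) :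
    (newtonPoly f y r).eval t +
      divDiff f (fun i ↦ if i = 0 then t else y (i - 1)) 0 r * ∏ j ∈ Finset.range r, (t - y j) =
      f t := by
  have h := eval_newtonPoly_node_zero f (fun i ↦ if i = 0 then t else y (i - 1)) r
  rw [newtonPoly_succ_eq_shift r (by simpa using ht)] at h
  simpa [Lagrange.eval_nodal] using h

end DividedDifferences

section Aitken

theorem eval_interpolate_eq_div_sub_erase {F ι : Type*} [Field F] [DecidableEq ι] {s : Finset ι}
    {v : ι → F} {i j : ι} (hv : Set.InjOn v s) (hi : i ∈ s) (hj : j ∈ s) (hij : i ≠ j)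
    (g : ι → F) (t : F) :
    (Lagrange.interpolate s v g).eval t =
      ((v j - t) * (Lagrange.interpolate (s.erase j) v g).eval t -
        (v i - t) * (Lagrange.interpolate (s.erase i) v g).eval t) / (v j - v i) := by
  have hne : v j - v i ≠ 0 := sub_ne_zero.2 (hv.ne hj hi hij.symm)
  have hne' : v i - v j ≠ 0 := sub_ne_zero.2 (hv.ne hi hj hij)
  rw [Lagrange.interpolate_eq_add_interpolate_erase g hv hi hj hij]
  simp only [Lagrange.basisDivisor, eval_add, eval_mul, eval_C, eval_sub, eval_X]
  grind

variable {xs : ℕ → ℝ} {g : ℕ → ℝ} {t : ℝ}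

theorem aitken_eq_eval_interpolate {r i j : ℕ} (hri : r ≤ i) (hij : i < j)
    (hxs : Set.InjOn xs (insert j (Finset.Icc r i) : Finset ℕ)) :
    aitken xs t g r i j = (Lagrange.interpolate (insert j (Finset.Icc r i)) xs g).eval t := by
  induction i, hri using Nat.le_induction generalizing j with
  | base =>
    rw [eval_interpolate_eq_div_sub_erase hxs (i := r) (j := j) (by simp) (by simp) hij.ne, aitken,
      dif_pos le_rfl, Finset.Icc_self, Finset.erase_insert (by simpa using hij.ne'),
      Finset.pair_comm, Finset.erase_insert (by simpa using hij.ne)]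
    simp
  | succ i hri ih =>
    have herase_j : (insert j (Finset.Icc r (i + 1))).erase j =
        insert (i + 1) (Finset.Icc r i) := by ext; grind
    have herase_succ : (insert j (Finset.Icc r (i + 1))).erase (i + 1) =
        insert j (Finset.Icc r i) := by ext; grind
    rw [eval_interpolate_eq_div_sub_erase hxs (i := i + 1) (j := j) (by grind) (by simp) hij.ne,
      aitken, dif_neg (by lia), Nat.add_sub_cancel, herase_j, herase_succ, ih i.lt_succ_self,
      ih (by lia)]
    · exact hxs.mono (by rw [← herase_succ]; exact mod_cast Finset.erase_subset _ _)
    · exact hxs.mono (by rw [← herase_j]; exact mod_cast Finset.erase_subset _ _)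

theorem aitkenLast_eq_eval_interpolate {r n : ℕ} (hrn : r ≤ n)
    (hxs : Set.InjOn xs (Finset.Icc r n)) :
    aitkenLast xs t g r n = (Lagrange.interpolate (Finset.Icc r n) xs g).eval t := by
  rcases hrn.eq_or_lt with rfl | hlt
  · simp [aitkenLast]
  · have hIcc : Finset.Icc r n = insert n (Finset.Icc r (n - 1)) := by ext; grind
    rw [aitkenLast, if_neg hlt.not_ge, hIcc,
      aitken_eq_eval_interpolate (by lia) (by lia) (hIcc ▸ hxs)]

end Aitken

section InterpolationError

theorem iteratedDeriv_polynomial_eval {𝕜 : Type*} [NontriviallyNormedField 𝕜] (P : 𝕜[X]) (k : ℕ) :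
    iteratedDeriv k (fun t ↦ P.eval t) = fun t ↦ (derivative^[k] P).eval t := by
  induction k generalizing P with
  | zero => simp
  | succ k ih =>
    rw [iteratedDeriv_succ', Function.iterate_succ_apply, ← ih]
    congr with t
    exact P.deriv

theorem iterate_derivative_eq_C_of_natDegree_le {R : Type*} [Semiring R] {P : R[X]} {k : ℕ}
    (hP : P.natDegree ≤ k) : derivative^[k] P = C (k.factorial * P.coeff k) := by
  ext m
  rw [coeff_iterate_derivative, coeff_C]
  split_ifs with hm
  · rw [hm, zero_add, Nat.descFactorial_self, nsmul_eq_mul]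
  · rw [coeff_eq_zero_of_natDegree_lt (by lia), smul_zero]

variable {S : Set ℝ} {f : ℝ → ℝ}

theorem exists_strictMono_derivWithin_eq_zero (hS : Convex ℝ S) (hf : ContinuousOn f S) {k : ℕ}
    {z : Fin (k + 2) → ℝ} (hz : StrictMono z) (hzS : ∀ i, z i ∈ S) (hfz : ∀ i, f (z i) = 0) :
    ∃ w : Fin (k + 1) → ℝ, StrictMono w ∧ (∀ i, w i ∈ convexHull ℝ (Set.range z)) ∧
      ∀ i, derivWithin f S (w i) = 0 := by
  have hIcc (i : Fin (k + 1)) : Set.Icc (z i.castSucc) (z i.succ) ⊆ S :=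
    hS.ordConnected.out (hzS _) (hzS _)
  have hrolle (i : Fin (k + 1)) : ∃ w ∈ Set.Ioo (z i.castSucc) (z i.succ), deriv f w = 0 :=
    exists_deriv_eq_zero (hz i.castSucc_lt_succ) (hf.mono (hIcc i)) ((hfz _).trans (hfz _).symm)
  choose w hw hderiv using hrolle
  have hz_hull (i) : z i ∈ convexHull ℝ (Set.range z) := subset_convexHull ℝ _ ⟨i, rfl⟩
  refine ⟨w, fun i j hij ↦ ?_, fun i ↦ ?_, fun i ↦ ?_⟩
  · calc w i < z i.succ := (hw i).2
      _ ≤ z j.castSucc := hz.monotone (Fin.succ_le_castSucc_iff.2 hij)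
      _ < w j := (hw j).1
  · exact (convex_convexHull ℝ _).ordConnected.out (hz_hull _) (hz_hull _)
      (Set.Ioo_subset_Icc_self (hw i))
  · rw [derivWithin_of_mem_nhds (Filter.mem_of_superset (Icc_mem_nhds (hw i).1 (hw i).2) (hIcc i)),
      hderiv i]

theorem exists_iteratedDerivWithin_eq_zero (hS : Convex ℝ S) (hS' : UniqueDiffOn ℝ S) {k : ℕ}
    (hf : ContDiffOn ℝ k f S) {z : Fin (k + 1) → ℝ} (hz : StrictMono z) (hzS : ∀ i, z i ∈ S)
    (hfz : ∀ i, f (z i) = 0) :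
    ∃ ξ ∈ convexHull ℝ (Set.range z), iteratedDerivWithin k f S ξ = 0 := by
  induction k generalizing f with
  | zero => exact ⟨z 0, subset_convexHull ℝ _ ⟨0, rfl⟩, by simpa using hfz 0⟩
  | succ k ih =>
    obtain ⟨w, hw, hwz, hderiv⟩ :=
      exists_strictMono_derivWithin_eq_zero hS hf.continuousOn hz hzS hfz
    have hwS (i) : w i ∈ S := convexHull_min (Set.range_subset_iff.2 hzS) hS (hwz i)
    obtain ⟨ξ, hξ, h⟩ := ih (hf.derivWithin hS' (by norm_cast)) hw hwS hderiv
    refine ⟨ξ, convexHull_min (Set.range_subset_iff.2 hwz) (convex_convexHull ℝ _) hξ, ?_⟩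
    rw [iteratedDerivWithin_succ', h]

theorem exists_iteratedDerivWithin_eq_factorial_mul_coeff (hS : Convex ℝ S)
    (hS' : UniqueDiffOn ℝ S) {k : ℕ} (hf : ContDiffOn ℝ k f S) {s : Finset ℝ}
    (hs : s.card = k + 1) (hsS : ↑s ⊆ S) {P : ℝ[X]} (hP : P.natDegree ≤ k)
    (hPf : ∀ t ∈ s, P.eval t = f t) :
    ∃ ξ ∈ convexHull ℝ (s : Set ℝ), iteratedDerivWithin k f S ξ = k.factorial * P.coeff k := by
  have hPsmooth : ContDiff ℝ k fun t ↦ P.eval t := by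
    simpa only [coe_aeval_eq_eval] using P.contDiff_aeval (𝕜 := ℝ) k
  have hmem (i) : s.orderEmbOfFin hs i ∈ s := s.orderEmbOfFin_mem hs i
  obtain ⟨ξ, hξ, h⟩ := exists_iteratedDerivWithin_eq_zero hS hS' (hf.sub hPsmooth.contDiffOn)
    (s.orderEmbOfFin hs).strictMono (fun i ↦ hsS (hmem i))
    fun i ↦ sub_eq_zero.2 (hPf _ (hmem i)).symm
  rw [s.range_orderEmbOfFin hs] at hξ
  have hξS : ξ ∈ S := convexHull_min hsS hS hξ
  refine ⟨ξ, hξ, ?_⟩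
  rw [← Pi.sub_def, iteratedDerivWithin_sub hξS hS' (hf ξ hξS) hPsmooth.contDiffWithinAt,
    sub_eq_zero, iteratedDerivWithin_eq_iteratedDeriv hS' hPsmooth.contDiffAt hξS,
    iteratedDeriv_polynomial_eval] at h
  simpa only [iterate_derivative_eq_C_of_natDegree_le hP, eval_C] using h

theorem exists_eq_eval_add_iteratedDerivWithin_mul_prod (hS : Convex ℝ S) (hS' : UniqueDiffOn ℝ S)
    {s : Finset ℝ} (hf : ContDiffOn ℝ s.card f S) (hsS : ↑s ⊆ S) {P : ℝ[X]}
    (hP : P.degree < s.card) (hPf : ∀ t ∈ s, P.eval t = f t) {x : ℝ} (hx : x ∈ S) :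
    ∃ ξ ∈ convexHull ℝ (insert x (s : Set ℝ)),
      f x = P.eval x +
        iteratedDerivWithin s.card f S ξ / s.card.factorial * ∏ t ∈ s, (x - t) := by
  by_cases hxs : x ∈ s
  · refine ⟨x, subset_convexHull ℝ _ (Set.mem_insert x _), ?_⟩
    rw [hPf x hxs, Finset.prod_eq_zero hxs (sub_self x), mul_zero, add_zero]
  set ω := Lagrange.nodal s (id : ℝ → ℝ)
  have hωx : ω.eval x ≠ 0 := Lagrange.eval_nodal_not_at_node fun t ht h ↦ hxs (h ▸ ht)
  have hωdeg : ω.natDegree = s.card := Lagrange.natDegree_nodal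
  obtain ⟨K, hK⟩ : ∃ K, K * ω.eval x = f x - P.eval x := ⟨_, div_mul_cancel₀ _ hωx⟩
  -- `Q` interpolates `f` at `x` as well, and its leading coefficient is `K`.
  set Q := P + C K * ω
  have hQdeg : Q.natDegree ≤ s.card :=
    natDegree_add_le_of_degree_le (natDegree_le_of_degree_le hP.le)
      ((natDegree_C_mul_le _ _).trans hωdeg.le)
  have hQcoeff : Q.coeff s.card = K := by
    rw [coeff_add, coeff_C_mul, coeff_eq_zero_of_degree_lt hP, ← hωdeg,
      Lagrange.nodal_monic.coeff_natDegree, zero_add, mul_one]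
  have hQf : ∀ t ∈ insert x s, Q.eval t = f t := by
    refine (Finset.forall_mem_insert _ _ _).2 ⟨?_, fun t ht ↦ ?_⟩
    · rw [eval_add, eval_mul, eval_C, hK, add_sub_cancel]
    · have hωt : ω.eval t = 0 := Lagrange.eval_nodal_at_node (v := id) ht
      rw [eval_add, eval_mul, hωt, mul_zero, add_zero, hPf t ht]
  obtain ⟨ξ, hξ, hder⟩ := exists_iteratedDerivWithin_eq_factorial_mul_coeff hS hS' hf
    (Finset.card_insert_of_notMem hxs)
    (by rw [Finset.coe_insert]; exact Set.insert_subset hx hsS) hQdeg hQf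
  refine ⟨ξ, by rwa [Finset.coe_insert] at hξ, ?_⟩
  have hωprod : ω.eval x = ∏ t ∈ s, (x - t) := Lagrange.eval_nodal
  rw [hder, hQcoeff, mul_div_cancel_left₀ _ (by positivity), ← hωprod, hK, add_sub_cancel]

end InterpolationError

section NewtonAitken

/-- The interpolant of `f` at `X 0, …, X n` in Newton form at the first `r` nodes, with the
remaining factor `t ↦ f[t, X 0, …, X (r - 1)]` interpolated at `X r, …, X n`. -/
noncomputable def newtonAitkenPoly (f : ℝ → ℝ) (X : ℕ → ℝ) (r n : ℕ) : ℝ[X] :=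
  newtonPoly f X r +
    Lagrange.interpolate (Finset.Icc r n) X
        (fun j ↦ divDiff f (fun i ↦ if i = 0 then X j else X (i - 1)) 0 r) *
      Lagrange.nodal (Finset.range r) X

variable {f : ℝ → ℝ} {X : ℕ → ℝ} {r n : ℕ}

theorem degree_newtonAitkenPoly_lt (hrn : r ≤ n) (hX : Set.InjOn X (Set.Iic n)) :
    (newtonAitkenPoly f X r n).degree < (n + 1 : ℕ) := by
  have hX' : Set.InjOn X (Finset.Icc r n) := hX.mono fun i hi ↦ (Finset.mem_Icc.1 hi).2
  refine (degree_add_le _ _).trans_lt (max_lt ?_ ?_)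
  · exact (degree_newtonPoly_lt f X r).trans (by exact_mod_cast Nat.lt_succ_of_le hrn)
  · have hcard : (Finset.Icc r n).card + r = n + 1 := by rw [Nat.card_Icc]; lia
    rw [degree_mul, Lagrange.degree_nodal, Finset.card_range, ← hcard, Nat.cast_add]
    exact WithBot.add_lt_add_right WithBot.coe_ne_bot (Lagrange.degree_interpolate_lt _ hX')

theorem eval_newtonAitkenPoly_node (hrn : r ≤ n) (hX : Set.InjOn X (Set.Iic n)) {i : ℕ}
    (hi : i ≤ n) :
    (newtonAitkenPoly f X r n).eval (X i) = f (X i) := by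
  rw [newtonAitkenPoly, eval_add, eval_mul]
  rcases lt_or_ge i r with hir | hri
  · rw [Lagrange.eval_nodal_at_node (Finset.mem_range.2 hir), mul_zero, add_zero]
    exact eval_newtonPoly_node (hX.mono fun k hk ↦ (Set.mem_Iio.1 hk).le.trans hrn) hir
  · have hX' : Set.InjOn X (Finset.Icc r n) := hX.mono fun i hi ↦ (Finset.mem_Icc.1 hi).2
    rw [Lagrange.eval_interpolate_at_node _ hX' (Finset.mem_Icc.2 ⟨hri, hi⟩), Lagrange.eval_nodal]
    exact eval_newtonPoly_add_divDiff_cons fun k hk ↦ hX.ne (by grind) hi (by lia)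

theorem eval_newtonAitkenPoly (hrn : r ≤ n) (hX : Set.InjOn X (Set.Iic n)) (x : ℝ) :
    (newtonAitkenPoly f X r n).eval x =
      (∑ i ∈ Finset.range r, divDiff f X 0 i * ∏ j ∈ Finset.range i, (x - X j)) +
        aitkenLast X x (fun j ↦ divDiff f (fun i ↦ if i = 0 then X j else X (i - 1)) 0 r) r n *
          ∏ i ∈ Finset.range r, (x - X i) := by
  have hX' : Set.InjOn X (Finset.Icc r n) := hX.mono fun i hi ↦ (Finset.mem_Icc.1 hi).2
  rw [newtonAitkenPoly, eval_add, eval_mul, eval_newtonPoly, Lagrange.eval_nodal,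
    aitkenLast_eq_eval_interpolate hrn hX']

end NewtonAitken

theorem stmt_3_general {S : Set ℝ} (hS : Convex ℝ S) (hS' : UniqueDiffOn ℝ S) {r n : ℕ}
    (hrn : r ≤ n) {f : ℝ → ℝ} (hf : ContDiffOn ℝ (n + 1 : ℕ) f S) {x : ℝ} (hx : x ∈ S)
    {X : ℕ → ℝ} (hXS : ∀ i ≤ n, X i ∈ S) (hX : Set.InjOn X (Set.Iic n)) :
    ∃ ξ ∈ convexHull ℝ (insert x (X '' Set.Iic n)),
      f x = (∑ i ∈ Finset.range r, divDiff f X 0 i * ∏ j ∈ Finset.range i, (x - X j))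
        + aitkenLast X x (fun j ↦ divDiff f (fun i ↦ if i = 0 then X j else X (i - 1)) 0 r) r n
            * ∏ i ∈ Finset.range r, (x - X i)
        + iteratedDerivWithin (n + 1) f S ξ / (Nat.factorial (n + 1) : ℝ)
            * ∏ i ∈ Finset.range (n + 1), (x - X i) := by
  have hrange : (Finset.range (n + 1) : Set ℕ) = Set.Iic n := by ext; simp
  have hinj : Set.InjOn X (Finset.range (n + 1)) := by rwa [hrange]
  set nodes := (Finset.range (n + 1)).image X with hnodes
  have hcoe : (nodes : Set ℝ) = X '' Set.Iic n := by rw [Finset.coe_image, hrange]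
  have hcard : nodes.card = n + 1 := by
    rw [Finset.card_image_of_injOn hinj, Finset.card_range]
  obtain ⟨ξ, hξ, h⟩ := exists_eq_eval_add_iteratedDerivWithin_mul_prod hS hS' (s := nodes)
    (by rwa [hcard]) (by rw [hcoe]; exact Set.image_subset_iff.2 hXS)
    (by rw [hcard]; exact degree_newtonAitkenPoly_lt hrn hX)
    (Finset.forall_mem_image.2 fun i hi ↦
      eval_newtonAitkenPoly_node hrn hX (Finset.mem_range_succ_iff.1 hi)) hx
  rw [eval_newtonAitkenPoly hrn hX, hcard, hnodes, Finset.prod_image hinj] at h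
  exact ⟨ξ, hcoe ▸ hξ, h⟩

theorem stmt_3 (p q : ℝ) (hpq : p < q) (r n : ℕ) (hr : 1 ≤ r) (hrn : r ≤ n)
    (f : ℝ → ℝ) (hf : ContDiffOn ℝ (n + 1 : ℕ) f (Set.Icc p q))
    (x : ℝ) (X : ℕ → ℝ)
    (hx : x ∈ Set.Icc p q) (hX : ∀ i ≤ n, X i ∈ Set.Icc p q)
    (hxX : ∀ i ≤ n, X i ≠ x)
    (hXX : ∀ i j, i ≤ n → j ≤ n → i ≠ j → X i ≠ X j) :
    ∃ ξ ∈ convexHull ℝ (insert x (X '' Set.Iic n)),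
      f x = (∑ i ∈ Finset.range r, divDiff f X 0 i * ∏ j ∈ Finset.range i, (x - X j))
        + aitkenLast X x (fun j => divDiff f (fun i => if i = 0 then X j else X (i - 1)) 0 r) r n * ∏ i ∈ Finset.range r, (x - X i)
        + iteratedDerivWithin (n + 1) f (Set.Icc p q) ξ / (Nat.factorial (n + 1) : ℝ)
            * ∏ i ∈ Finset.range (n + 1), (x - X i) := by
  exact stmt_3_general (convex_Icc p q) (uniqueDiffOn_Icc hpq) hrn hf hx hX
    fun i hi j hj h ↦ by_contra fun hij ↦ hXX i j hi hj hij h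
end

section
/- Let p < q be reals, let n ≥ 1 and t ≥ 0 be integers, let f be (n+t+1)-times continuously differentiable on [p,q], and let x, x_0, …, x_n be pairwise distinct points of [p,q]. Define coefficients a_0 = 1 and a_k = −(a_0·N_k(x) + a_1·N_{k−1}(x) + … + a_{k−1}·N_1(x)) for k = 1, …, t. Then there exist points ξ_0, ξ_1, …, ξ_t in the smallest closed interval containing x, x_0, …, x_n such that f^{(t)}(x)/t! = Σ_{j=0}^{t} a_j·Ñ^{(t−j)}_{0,1,…,n}[x] + ∏_{i=0}^{n}(x − x_i) · Σ_{j=0}^{t} a_j·f^{(t+n+1−j)}(ξ_j)/(t+n+1−j)!. -/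
/-!
Fix `r`. Hermite interpolation of `f` at the point `x` (with multiplicity `r + 1`) and at the nodes
`X 0, …, X n` has leading coefficient `f^{(n+r+1)}(ξ)/(n+r+1)!`, by repeated use of Rolle's
theorem. Up to the factor `-∏ (x - X i)`, the same coefficient is the value at `x` of the Lagrange
interpolant of the numbers `(f - T)(X i)/(X i - x)^r`, where `T` is the Taylor polynomial of `f` at
`x` of degree `r`. As Neville iteration evaluates the Lagrange interpolant, this expresses the
iterate of `f (X i)/(X i - x)^r` as the convolution of the Taylor coefficients of `f` at `x` with
`N_0(x), …, N_r(x)`, plus a remainder. The numbers `a_0, …, a_t` are the first coefficients of the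
inverse of the power series `∑ N_k(x) z^k`, so convolving with them isolates the Taylor coefficient
of order `t`.
-/

section Rolle

variable {g : ℝ → ℝ} {s K : Set ℝ} {Z : Finset ℝ} {k : ℕ}

theorem exists_strictMono_derivWithin_eq_zero_s6 (hK : K.OrdConnected) (hKs : K ⊆ s)
    (hg : ContinuousOn g K) {z : Fin (k + 1) → ℝ} (hz : StrictMono z) (hzK : ∀ i, z i ∈ K)
    (hgz : ∀ i, g (z i) = 0) :
    ∃ c : Fin k → ℝ, StrictMono c ∧
      ∀ i, c i ∈ K ∧ c i ∉ Set.range z ∧ derivWithin g s (c i) = 0 := by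
  have hIcc (i : Fin k) : Set.Icc (z i.castSucc) (z i.succ) ⊆ K := hK.out (hzK _) (hzK _)
  have hRolle (i : Fin k) : ∃ c ∈ Set.Ioo (z i.castSucc) (z i.succ), deriv g c = 0 :=
    exists_deriv_eq_zero (hz Fin.castSucc_lt_succ) (hg.mono (hIcc i)) ((hgz _).trans (hgz _).symm)
  choose c hc hdc using hRolle
  refine ⟨c, fun i j hij ↦ ?_, fun i ↦ ⟨hIcc i (Set.Ioo_subset_Icc_self (hc i)), ?_, ?_⟩⟩
  · have hsucc : z i.succ ≤ z j.castSucc := hz.monotone (Fin.succ_le_castSucc_iff.2 hij)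
    exact (hc i).2.trans_le (hsucc.trans (hc j).1.le)
  · rintro ⟨j, hj⟩
    have hlow : i.castSucc < j := hz.lt_iff_lt.1 (hj ▸ (hc i).1)
    have hupp : j < i.succ := hz.lt_iff_lt.1 (hj ▸ (hc i).2)
    exact (Fin.castSucc_lt_iff_succ_le.1 hlow).not_gt hupp
  · have hnhds : s ∈ nhds (c i) :=
      Filter.mem_of_superset (Icc_mem_nhds (hc i).1 (hc i).2) ((hIcc i).trans hKs)
    rw [derivWithin_of_mem_nhds hnhds, hdc]

theorem exists_finset_derivWithin_eq_zero (hK : K.OrdConnected) (hKs : K ⊆ s)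
    (hg : ContinuousOn g K) (hZ : Z.card = k + 1) (hZK : ↑Z ⊆ K) (hgZ : ∀ z ∈ Z, g z = 0) :
    ∃ Z' : Finset ℝ, Z'.card = k ∧ ↑Z' ⊆ K ∧ Disjoint Z' Z ∧ ∀ z ∈ Z', derivWithin g s z = 0 := by
  have hmem (i) : Z.orderEmbOfFin hZ i ∈ Z := Z.orderEmbOfFin_mem hZ i
  obtain ⟨c, hc, hcs⟩ := exists_strictMono_derivWithin_eq_zero_s6 hK hKs hg
    (Z.orderEmbOfFin hZ).strictMono (fun i ↦ hZK (hmem i)) (fun i ↦ hgZ _ (hmem i))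
  rw [Finset.range_orderEmbOfFin] at hcs
  refine ⟨Finset.univ.map ⟨c, hc.injective⟩, by simp, ?_, ?_, ?_⟩
  · simpa [Set.range_subset_iff] using fun i ↦ (hcs i).1
  · simpa [Finset.disjoint_left] using fun i ↦ (hcs i).2.1
  · simpa using fun i ↦ (hcs i).2.2

theorem exists_iteratedDerivWithin_eq_zero_s6 (hK : K.OrdConnected) (hKs : K ⊆ s)
    (hg : ∀ m < k, ContinuousOn (iteratedDerivWithin m g s) K) (hZ : Z.card = k + 1)
    (hZK : ↑Z ⊆ K) (hgZ : ∀ z ∈ Z, g z = 0) :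
    ∃ ξ ∈ K, iteratedDerivWithin k g s ξ = 0 := by
  induction k generalizing g Z with
  | zero =>
    obtain ⟨z, hz⟩ : Z.Nonempty := Finset.card_pos.1 (by omega)
    exact ⟨z, hZK hz, by simpa using hgZ z hz⟩
  | succ k ih =>
    have hg₀ : ContinuousOn g K := by simpa using hg 0 k.succ_pos
    obtain ⟨Z', hZ', hZ'K, -, hgZ'⟩ := exists_finset_derivWithin_eq_zero hK hKs hg₀ hZ hZK hgZ
    rw [iteratedDerivWithin_succ']
    refine ih (fun m hm ↦ ?_) hZ' hZ'K hgZ'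
    rw [← iteratedDerivWithin_succ']
    exact hg (m + 1) (by omega)

theorem exists_iteratedDerivWithin_eq_zero_of_multiple_zero (hK : K.OrdConnected) (hKs : K ⊆ s)
    {r : ℕ} (hg : ∀ m < k + r, ContinuousOn (iteratedDerivWithin m g s) K)
    (hZ : Z.card = k + 1) (hZK : ↑Z ⊆ K) (hgZ : ∀ z ∈ Z, g z = 0)
    {x : ℝ} (hxK : x ∈ K) (hxZ : x ∉ Z) (hgx : ∀ m < r, iteratedDerivWithin m g s x = 0) :
    ∃ ξ ∈ K, iteratedDerivWithin (k + r) g s ξ = 0 := by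
  induction r generalizing g Z with
  | zero => exact exists_iteratedDerivWithin_eq_zero_s6 hK hKs hg hZ hZK hgZ
  | succ r ih =>
    have hg₀ : ContinuousOn g K := by simpa using hg 0 (by omega)
    have hgx₀ : g x = 0 := by simpa using hgx 0 r.succ_pos
    obtain ⟨Z', hZ', hZ'K, hdisj, hgZ'⟩ :=
      exists_finset_derivWithin_eq_zero (Z := insert x Z) hK hKs hg₀
        (by rw [Finset.card_insert_of_notMem hxZ, hZ])
        (by simpa [Set.insert_subset_iff] using ⟨hxK, hZK⟩) (by simpa using ⟨hgx₀, hgZ⟩)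
    rw [← add_assoc, iteratedDerivWithin_succ']
    refine ih (fun m hm ↦ ?_) hZ' hZ'K hgZ'
      (Finset.disjoint_right.1 hdisj (Finset.mem_insert_self x Z)) (fun m hm ↦ ?_)
    · rw [← iteratedDerivWithin_succ']
      exact hg (m + 1) (by omega)
    · rw [← iteratedDerivWithin_succ']
      exact hgx (m + 1) (by omega)

end Rolle

section PolynomialDerivatives

open Polynomial

theorem eval_iterate_derivative_eq_factorial_mul_taylor_coeff {R : Type*} [CommSemiring R]
    (p : R[X]) (m : ℕ) (x : R) :
    (derivative^[m] p).eval x = (m.factorial : R) * (taylor x p).coeff m := by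
  rw [taylor_coeff, ← factorial_smul_hasseDeriv, LinearMap.smul_apply, eval_smul, nsmul_eq_mul]

theorem eval_iterate_derivative_of_natDegree_le {R : Type*} [CommSemiring R] {p : R[X]} {k : ℕ}
    (hp : p.natDegree ≤ k) (x : R) :
    (derivative^[k] p).eval x = (k.factorial : R) * p.coeff k := by
  have hconst : (derivative^[k] p).natDegree ≤ 0 :=
    (natDegree_iterate_derivative p k).trans (by omega)
  rw [eq_C_of_natDegree_le_zero hconst, eval_C, coeff_iterate_derivative, zero_add,
    Nat.descFactorial_self, nsmul_eq_mul]

theorem iteratedDerivWithin_polynomial_eval {𝕜 : Type*} [NontriviallyNormedField 𝕜] {s : Set 𝕜}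
    (hs : UniqueDiffOn 𝕜 s) (p : 𝕜[X]) (k : ℕ) {y : 𝕜} (hy : y ∈ s) :
    iteratedDerivWithin k (fun z ↦ p.eval z) s y = (derivative^[k] p).eval y := by
  induction k generalizing p with
  | zero => simp
  | succ k ih =>
    have hderiv : Set.EqOn (derivWithin (fun z ↦ p.eval z) s) (fun z ↦ p.derivative.eval z) s :=
      fun z hz ↦ p.derivWithin (hs z hz)
    rw [iteratedDerivWithin_succ', iteratedDerivWithin_congr hderiv hy, ih,
      Function.iterate_succ_apply]

theorem exists_iteratedDerivWithin_div_factorial_eq_coeff {s K : Set ℝ} (hs : UniqueDiffOn ℝ s)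
    (hK : K.OrdConnected) (hKs : K ⊆ s) {f : ℝ → ℝ} {k r : ℕ}
    (hf : ContDiffOn ℝ (k + r : ℕ) f s) {p : ℝ[X]} (hp : p.natDegree ≤ k + r)
    {Z : Finset ℝ} (hZ : Z.card = k + 1) (hZK : ↑Z ⊆ K) (hfZ : ∀ z ∈ Z, f z = p.eval z)
    {x : ℝ} (hxK : x ∈ K) (hxZ : x ∉ Z)
    (hfx : ∀ m < r, iteratedDerivWithin m f s x / (m.factorial : ℝ) = (taylor x p).coeff m) :
    ∃ ξ ∈ K, iteratedDerivWithin (k + r) f s ξ / ((k + r).factorial : ℝ) = p.coeff (k + r) := by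
  have hp_smooth : ContDiffOn ℝ (k + r : ℕ) (fun z ↦ p.eval z) s :=
    (p.contDiff_aeval (k + r : ℕ)).contDiffOn
  have hderiv {m : ℕ} (hm : m ≤ k + r) {y : ℝ} (hy : y ∈ s) :
      iteratedDerivWithin m (f - fun z ↦ p.eval z) s y
        = iteratedDerivWithin m f s y - (derivative^[m] p).eval y := by
    have hm' : (m : WithTop ℕ∞) ≤ (k + r : ℕ) := by exact_mod_cast hm
    rw [iteratedDerivWithin_sub hy hs ((hf y hy).of_le hm') ((hp_smooth y hy).of_le hm'),
      iteratedDerivWithin_polynomial_eval hs p m hy]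
  have hcont (m : ℕ) (hm : m < k + r) :
      ContinuousOn (iteratedDerivWithin m (f - fun z ↦ p.eval z) s) K :=
    ((hf.sub hp_smooth).continuousOn_iteratedDerivWithin (by exact_mod_cast hm.le) hs).mono hKs
  have hx_zero (m : ℕ) (hm : m < r) :
      iteratedDerivWithin m (f - fun z ↦ p.eval z) s x = 0 := by
    rw [hderiv (by omega) (hKs hxK), eval_iterate_derivative_eq_factorial_mul_taylor_coeff,
      ← hfx m hm, mul_div_cancel₀ _ (by positivity), sub_self]
  obtain ⟨ξ, hξK, hξ⟩ := exists_iteratedDerivWithin_eq_zero_of_multiple_zero hK hKs hcont hZ hZK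
    (fun z hz ↦ sub_eq_zero.2 (hfZ z hz)) hxK hxZ hx_zero
  rw [hderiv le_rfl (hKs hξK), eval_iterate_derivative_of_natDegree_le hp, sub_eq_zero] at hξ
  exact ⟨ξ, hξK, by rw [hξ, mul_div_cancel_left₀ _ (by positivity)]⟩

end PolynomialDerivatives

section HermiteInterpolation

open Polynomial Lagrange

variable {F ι : Type*} [Field F] [DecidableEq ι]

/-- The polynomial of degree `< r` whose Taylor coefficients at `x` are `c 0, …, c (r - 1)`. -/
noncomputable def taylorTruncation (c : ℕ → F) (r : ℕ) (x : F) : F[X] :=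
  ∑ m ∈ Finset.range r, C (c m) * (X - C x) ^ m

/-- The cofactor `Q` in the Hermite interpolant `T + Q * (X - x) ^ r`, where
`T = taylorTruncation c r x`: it takes the values `(y i - T (v i)) / (v i - x) ^ r` at the nodes
`v i`. -/
noncomputable def hermiteCofactor (u : Finset ι) (v y : ι → F) (c : ℕ → F) (r : ℕ) (x : F) : F[X] :=
  interpolate u v fun i ↦ (y i - (taylorTruncation c r x).eval (v i)) / (v i - x) ^ r

/-- The Hermite interpolant with simple nodes `v i`, `i ∈ u`, where its values are `y i`, and a
node `x` of multiplicity `r`, where its first `r` Taylor coefficients are given by `c`. -/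
noncomputable def hermiteInterpolant (u : Finset ι) (v y : ι → F) (c : ℕ → F) (r : ℕ) (x : F) :
    F[X] :=
  taylorTruncation c r x + hermiteCofactor u v y c r x * (X - C x) ^ r

variable {u : Finset ι} {v : ι → F} (y : ι → F) (c : ℕ → F) (r : ℕ) {x : F}

theorem eval_taylorTruncation (x z : F) :
    (taylorTruncation c r x).eval z = ∑ m ∈ Finset.range r, c m * (z - x) ^ m := by
  simp [taylorTruncation, eval_finsetSum]

theorem degree_taylorTruncation_lt (x : F) : (taylorTruncation c r x).degree < r := by
  refine (degree_sum_le _ _).trans_lt ((Finset.sup_lt_iff (WithBot.bot_lt_coe r)).2 fun m hm ↦ ?_)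
  calc (C (c m) * (X - C x) ^ m).degree
      ≤ 0 + (m : WithBot ℕ) * 1 :=
        degree_mul_le_of_le degree_C_le (degree_pow_le_of_le m (degree_X_sub_C_le x))
    _ = (m : WithBot ℕ) := by simp
    _ < (r : WithBot ℕ) := by exact_mod_cast Finset.mem_range.1 hm

theorem taylor_hermiteInterpolant_coeff {m : ℕ} (hm : m < r) :
    (taylor x (hermiteInterpolant u v y c r x)).coeff m = c m := by
  have htaylor : taylor x (hermiteInterpolant u v y c r x)
      = ∑ m ∈ Finset.range r, C (c m) * X ^ m + taylor x (hermiteCofactor u v y c r x) * X ^ r := by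
    simp [hermiteInterpolant, taylorTruncation, taylor_mul, taylor_pow]
  rw [htaylor, coeff_add, finsetSum_coeff, coeff_mul_X_pow', if_neg hm.not_ge, add_zero]
  simp [coeff_C_mul_X_pow, -coeff_C_mul, hm]

theorem eval_hermiteInterpolant_node (hv : Set.InjOn v u) {i : ι} (hi : i ∈ u) (hix : v i ≠ x) :
    (hermiteInterpolant u v y c r x).eval (v i) = y i := by
  have hpow : (v i - x) ^ r ≠ 0 := pow_ne_zero r (sub_ne_zero.2 hix)
  rw [hermiteInterpolant, hermiteCofactor, eval_add, eval_mul, eval_interpolate_at_node _ hv hi]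
  simp [hpow]

theorem natDegree_hermiteCofactor_le {k : ℕ} (hv : Set.InjOn v u) (hu : u.card = k + 1) :
    (hermiteCofactor u v y c r x).natDegree ≤ k :=
  natDegree_le_iff_degree_le.2 <| (degree_interpolate_le _ hv).trans (by simp [hu])

theorem natDegree_hermiteInterpolant_le {k : ℕ} (hv : Set.InjOn v u) (hu : u.card = k + 1) :
    (hermiteInterpolant u v y c r x).natDegree ≤ k + r := by
  refine natDegree_add_le_of_degree_le ?_ (natDegree_mul_le_of_le ?_ ?_)
  · exact (natDegree_le_of_degree_le (degree_taylorTruncation_lt c r x).le).trans (by omega)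
  · exact natDegree_hermiteCofactor_le y c r hv hu
  · exact (natDegree_pow_le_of_le r (natDegree_X_sub_C_le x)).trans_eq (mul_one r)

theorem hermiteInterpolant_coeff {k : ℕ} (hv : Set.InjOn v u) (hu : u.card = k + 1) :
    (hermiteInterpolant u v y c r x).coeff (k + r) = (hermiteCofactor u v y c r x).coeff k := by
  have hT : (taylorTruncation c r x).coeff (k + r) = 0 :=
    coeff_eq_zero_of_degree_lt ((degree_taylorTruncation_lt c r x).trans_le (by norm_cast; omega))
  have hlead : ((X - C x) ^ r).coeff r = 1 := by
    simpa using ((monic_X_sub_C x).pow r).coeff_natDegree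
  rw [hermiteInterpolant, coeff_add, hT, zero_add,
    coeff_mul_add_eq_of_natDegree_le (natDegree_hermiteCofactor_le y c r hv hu)
      (by simp), hlead, mul_one]

theorem eval_interpolate_sub_mul (w : ι → F) (hv : Set.InjOn v u) (hx : ∀ i ∈ u, v i ≠ x) :
    (interpolate u v fun i ↦ (v i - x) * w i).eval x
      = -((nodal u v).eval x * (interpolate u v w).coeff (u.card - 1)) := by
  rw [eval_interpolate_not_at_node _ fun i hi ↦ (hx i hi).symm,
    coeff_eq_sum hv (degree_interpolate_lt w hv), ← mul_neg, ← Finset.sum_neg_distrib]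
  congr 1
  refine Finset.sum_congr rfl fun i hi ↦ ?_
  have hxi : x - v i ≠ 0 := sub_ne_zero.2 (hx i hi).symm
  rw [eval_interpolate_at_node w hv hi, nodalWeight, Finset.prod_inv_distrib, ← neg_sub x (v i)]
  field_simp

theorem div_pow_eq_sum_add_remainder {z : F} (hz : z ≠ 0) (b : F) :
    b / z ^ r = ∑ m ∈ Finset.range (r + 1), c m * (1 / z ^ (r - m))
      + z * ((b - ∑ m ∈ Finset.range (r + 1), c m * z ^ m) / z ^ (r + 1)) := by
  have hsum : ∑ m ∈ Finset.range (r + 1), c m * (1 / z ^ (r - m))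
      = (∑ m ∈ Finset.range (r + 1), c m * z ^ m) / z ^ r := by
    rw [Finset.sum_div]
    refine Finset.sum_congr rfl fun m hm ↦ ?_
    rw [pow_sub₀ z hz (by simpa [Nat.lt_succ_iff] using hm)]
    field_simp
  rw [hsum]
  field_simp
  ring

theorem eval_interpolate_div_pow (hv : Set.InjOn v u) (hx : ∀ i ∈ u, v i ≠ x) {k : ℕ}
    (hu : u.card = k + 1) :
    (interpolate u v fun i ↦ y i / (v i - x) ^ r).eval x
      = ∑ m ∈ Finset.range (r + 1),
          c m * (interpolate u v fun i ↦ 1 / (v i - x) ^ (r - m)).eval x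
        - (nodal u v).eval x * (hermiteInterpolant u v y c (r + 1) x).coeff (k + (r + 1)) := by
  set w : ι → F := fun i ↦
    (y i - (taylorTruncation c (r + 1) x).eval (v i)) / (v i - x) ^ (r + 1) with hw
  have hsplit : interpolate u v (fun i ↦ y i / (v i - x) ^ r)
      = ∑ m ∈ Finset.range (r + 1), c m • interpolate u v (fun i ↦ 1 / (v i - x) ^ (r - m))
        + interpolate u v (fun i ↦ (v i - x) * w i) := by
    simp only [← map_smul, ← map_sum, ← map_add]
    refine interpolate_eq_of_values_eq_on _ _ fun i hi ↦ ?_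
    simpa [hw, eval_taylorTruncation] using
      div_pow_eq_sum_add_remainder c r (sub_ne_zero.2 (hx i hi)) (y i)
  rw [hsplit, eval_add, eval_interpolate_sub_mul w hv hx, hermiteInterpolant_coeff y c _ hv hu, hu,
    hermiteCofactor, ← sub_eq_add_neg]
  simp [eval_finsetSum, hw]

end HermiteInterpolation

theorem exists_eval_interpolate_div_pow_eq {ι : Type*} [DecidableEq ι] {u : Finset ι} {v : ι → ℝ}
    {s : Set ℝ} (hs : Convex ℝ s) {f : ℝ → ℝ} {k r : ℕ} (hf : ContDiffOn ℝ (k + r + 1 : ℕ) f s)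
    (hu : u.card = k + 1) (hv : Set.InjOn v u) (hvs : ∀ i ∈ u, v i ∈ s)
    {x : ℝ} (hxs : x ∈ s) (hx : ∀ i ∈ u, v i ≠ x) :
    ∃ ξ ∈ convexHull ℝ (insert x (v '' u)),
      (Lagrange.interpolate u v fun i ↦ f (v i) / (v i - x) ^ r).eval x
        = ∑ m ∈ Finset.range (r + 1), iteratedDerivWithin m f s x / (m.factorial : ℝ)
            * (Lagrange.interpolate u v fun i ↦ 1 / (v i - x) ^ (r - m)).eval x
          - (∏ i ∈ u, (x - v i))
            * (iteratedDerivWithin (k + r + 1) f s ξ / ((k + r + 1).factorial : ℝ)) := by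
  obtain ⟨i₀, hi₀⟩ : u.Nonempty := Finset.card_pos.1 (by omega)
  have hs_diff : UniqueDiffOn ℝ s := uniqueDiffOn_convex hs <|
    hs.nontrivial_iff_nonempty_interior.1 ⟨v i₀, hvs i₀ hi₀, x, hxs, hx i₀ hi₀⟩
  set c : ℕ → ℝ := fun m ↦ iteratedDerivWithin m f s x / (m.factorial : ℝ)
  have hpoints : insert x (v '' u) ⊆ s := by
    simpa [Set.insert_subset_iff] using ⟨hxs, hvs⟩
  have hsub := subset_convexHull ℝ (insert x (v '' u))
  obtain ⟨ξ, hξ, hcoeff⟩ := exists_iteratedDerivWithin_div_factorial_eq_coeff (r := r + 1) hs_diff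
    (convex_convexHull ℝ (insert x (v '' u))).ordConnected (convexHull_min hpoints hs) hf
    (natDegree_hermiteInterpolant_le (fun i ↦ f (v i)) c (r + 1) hv hu)
    (Z := u.image v) (by rw [Finset.card_image_of_injOn hv, hu])
    (by rw [Finset.coe_image]; exact (Set.subset_insert _ _).trans hsub)
    (Finset.forall_mem_image.2 fun i hi ↦
      (eval_hermiteInterpolant_node (fun i ↦ f (v i)) c (r + 1) hv hi (hx i hi)).symm)
    (hsub (Set.mem_insert _ _)) (by simpa using hx)
    (fun m hm ↦ (taylor_hermiteInterpolant_coeff _ c (r + 1) hm).symm)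
  refine ⟨ξ, hξ, ?_⟩
  rw [eval_interpolate_div_pow _ c r hv hx hu, ← hcoeff, Lagrange.eval_nodal, ← add_assoc]

section Neville

open Finset Lagrange

variable {xs : ℕ → ℝ}

theorem neville_eq_eval_interpolate (x : ℝ) (g : ℕ → ℝ) {i j : ℕ}
    (hxs : Set.InjOn xs (Icc j (i + j))) :
    neville xs x g i j = (interpolate (Icc j (i + j)) xs g).eval x := by
  induction i generalizing j with
  | zero => simp [neville]
  | succ i ih =>
    have hlast : (Icc j (i + 1 + j)).erase (i + 1 + j) = Icc j (i + j) := by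
      ext a; simp only [mem_erase, mem_Icc]; omega
    have hfirst : (Icc j (i + 1 + j)).erase j = Icc (j + 1) (i + (j + 1)) := by
      ext a; simp only [mem_erase, mem_Icc]; omega
    have hne : xs (i + 1 + j) - xs j ≠ 0 :=
      sub_ne_zero.2 (hxs.ne (by simp) (by simp) (by omega))
    have hne' : xs j - xs (i + 1 + j) ≠ 0 := by rwa [← neg_sub, neg_ne_zero]
    rw [interpolate_eq_add_interpolate_erase g hxs (i := j) (j := i + 1 + j) (by simp) (by simp)
      (by omega), neville, hlast, hfirst,
      ih (hxs.mono (by rw [← hlast]; exact_mod_cast erase_subset _ _)),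
      ih (hxs.mono (by rw [← hfirst]; exact_mod_cast erase_subset _ _))]
    simp only [Polynomial.eval_add, Polynomial.eval_mul, basisDivisor, Polynomial.eval_C,
      Polynomial.eval_sub, Polynomial.eval_X]
    field_simp
    ring

theorem neville_zero_right_eq_eval_interpolate (x : ℝ) (g : ℕ → ℝ) {n : ℕ}
    (hxs : Set.InjOn xs (range (n + 1))) :
    neville xs x g n 0 = (interpolate (range (n + 1)) xs g).eval x := by
  have hIcc : Icc 0 (n + 0) = range (n + 1) := by
    ext a; simp only [mem_Icc, mem_range]; omega
  rw [← hIcc] at hxs ⊢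
  exact neville_eq_eval_interpolate x g hxs

end Neville

theorem convolution_eq_one_of_recurrence {R : Type*} [CommRing R] {a N : ℕ → R} {t : ℕ}
    (hN0 : N 0 = 1) (ha0 : a 0 = 1)
    (ha : ∀ m, 1 ≤ m → m ≤ t → a m = -∑ j ∈ Finset.range m, a j * N (m - j)) {m : ℕ} (hm : m ≤ t) :
    ∑ j ∈ Finset.range (m + 1), a j * N (m - j) = if m = 0 then 1 else 0 := by
  rcases Nat.eq_zero_or_pos m with rfl | hpos
  · simp [ha0, hN0]
  · rw [Finset.sum_range_succ, Nat.sub_self, hN0, mul_one, ha m hpos hm, add_neg_cancel,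
      if_neg hpos.ne']

theorem sum_mul_convolution_eq_of_convolution_eq_one {R : Type*} [CommSemiring R] {a N : ℕ → R}
    {t : ℕ} (haN : ∀ m ≤ t, ∑ j ∈ Finset.range (m + 1), a j * N (m - j) = if m = 0 then 1 else 0)
    (c : ℕ → R) :
    ∑ j ∈ Finset.range (t + 1), a j * ∑ m ∈ Finset.range (t - j + 1), c m * N (t - j - m)
      = c t := by
  calc ∑ j ∈ Finset.range (t + 1), a j * ∑ m ∈ Finset.range (t - j + 1), c m * N (t - j - m)
      = ∑ m ∈ Finset.range (t + 1), c m * ∑ j ∈ Finset.range (t - m + 1), a j * N (t - m - j) := by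
        simp only [Finset.mul_sum]
        rw [Finset.sum_comm' (t' := Finset.range (t + 1)) (s' := fun m ↦ Finset.range (t - m + 1))
          (by simp only [Finset.mem_range]; omega)]
        simp only [mul_left_comm, Nat.sub_right_comm]
    _ = ∑ m ∈ Finset.range (t + 1), if m = t then c m else 0 := by
        refine Finset.sum_congr rfl fun m hm ↦ ?_
        have hm_le : m ≤ t := by simpa [Nat.lt_succ_iff] using hm
        have hm_iff : t - m = 0 ↔ m = t := by omega
        simp [haN (t - m) (Nat.sub_le t m), hm_iff]
    _ = c t := by simp

theorem stmt_6_general {s : Set ℝ} (hs : Convex ℝ s) {n t : ℕ}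
    {f : ℝ → ℝ} (hf : ContDiffOn ℝ (n + t + 1 : ℕ) f s)
    {x : ℝ} {X : ℕ → ℝ} (hx : x ∈ s) (hX : ∀ i ≤ n, X i ∈ s) (hxX : ∀ i ≤ n, X i ≠ x)
    (hXX : ∀ i j, i ≤ n → j ≤ n → i ≠ j → X i ≠ X j)
    {a : ℕ → ℝ} (ha0 : a 0 = 1)
    (hak : ∀ m, 1 ≤ m → m ≤ t →
      a m = -(∑ j ∈ Finset.range m, a j * neville X x (fun i => 1 / (X i - x) ^ (m - j)) n 0)) :
    ∃ ξ : ℕ → ℝ, (∀ j ≤ t, ξ j ∈ convexHull ℝ (insert x (X '' Set.Iic n))) ∧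
      iteratedDerivWithin t f s x / (Nat.factorial t : ℝ)
        = (∑ j ∈ Finset.range (t + 1),
              a j * neville X x (fun i => f (X i) / (X i - x) ^ (t - j)) n 0)
          + (∏ i ∈ Finset.range (n + 1), (x - X i))
            * ∑ j ∈ Finset.range (t + 1),
                a j * iteratedDerivWithin (t + n + 1 - j) f s (ξ j)
                  / (Nat.factorial (t + n + 1 - j) : ℝ) := by
  have hle {i : ℕ} : i ∈ Finset.range (n + 1) ↔ i ≤ n := by simp
  have hinj : Set.InjOn X (Finset.range (n + 1)) := fun i hi j hj hij ↦ by
    by_contra hne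
    exact hXX i j (hle.1 hi) (hle.1 hj) hne hij
  have hnodes : X '' Set.Iic n = X '' Finset.range (n + 1) := by
    congr 1; ext i; exact hle.symm
  simp only [neville_zero_right_eq_eval_interpolate x _ hinj] at hak ⊢
  set N : ℕ → ℝ := fun k ↦
    (Lagrange.interpolate (Finset.range (n + 1)) X fun i ↦ 1 / (X i - x) ^ k).eval x with hN
  have hN0 : N 0 = 1 := by
    simpa [hN, Pi.one_def] using
      congr_arg (Polynomial.eval x) (Lagrange.interpolate_one hinj (by simp))
  have hmean (j : ℕ) (hj : j ≤ t) := exists_eval_interpolate_div_pow_eq (r := t - j) hs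
    (hf.of_le (by norm_cast; omega)) (Finset.card_range (n + 1)) hinj (fun i hi ↦ hX i (hle.1 hi))
    hx (fun i hi ↦ hxX i (hle.1 hi))
  choose! ξ hξ hξ_eq using hmean
  refine ⟨ξ, fun j hj ↦ hnodes ▸ hξ j hj, ?_⟩
  rw [← sum_mul_convolution_eq_of_convolution_eq_one
    (fun m ↦ convolution_eq_one_of_recurrence hN0 ha0 hak)
    fun m ↦ iteratedDerivWithin m f s x / (m.factorial : ℝ),
    Finset.mul_sum, ← Finset.sum_add_distrib]
  refine Finset.sum_congr rfl fun j hj ↦ ?_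
  have hj' : j ≤ t := by simpa [Nat.lt_succ_iff] using hj
  rw [hξ_eq j hj', show n + (t - j) + 1 = t + n + 1 - j by omega]
  ring

theorem stmt_6 (p q : ℝ) (hpq : p < q) (n t : ℕ) (hn : 1 ≤ n)
    (f : ℝ → ℝ) (hf : ContDiffOn ℝ (n + t + 1 : ℕ) f (Set.Icc p q))
    (x : ℝ) (X : ℕ → ℝ)
    (hx : x ∈ Set.Icc p q) (hX : ∀ i ≤ n, X i ∈ Set.Icc p q)
    (hxX : ∀ i ≤ n, X i ≠ x)
    (hXX : ∀ i j, i ≤ n → j ≤ n → i ≠ j → X i ≠ X j)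
    (a : ℕ → ℝ) (ha0 : a 0 = 1)
    (hak : ∀ m, 1 ≤ m → m ≤ t →
      a m = -(∑ j ∈ Finset.range m, a j * neville X x (fun i => 1 / (X i - x) ^ (m - j)) n 0)) :
    ∃ ξ : ℕ → ℝ, (∀ j ≤ t, ξ j ∈ convexHull ℝ (insert x (X '' Set.Iic n))) ∧
      iteratedDerivWithin t f (Set.Icc p q) x / (Nat.factorial t : ℝ)
        = (∑ j ∈ Finset.range (t + 1),
              a j * neville X x (fun i => f (X i) / (X i - x) ^ (t - j)) n 0)
          + (∏ i ∈ Finset.range (n + 1), (x - X i))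
            * ∑ j ∈ Finset.range (t + 1),
                a j * iteratedDerivWithin (t + n + 1 - j) f (Set.Icc p q) (ξ j)
                  / (Nat.factorial (t + n + 1 - j) : ℝ) :=
  stmt_6_general (convex_Icc p q) hf hx hX hxX hXX ha0 hak
end
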